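/- arXiv:cs/0102025 — 2 statements merged into one kernel-verified Lean document; each statement's English description precedes it below -/
import Mathlib

section
/- For every LO program P and every set of facts I, den(S_P(I)) = T_P(den(I)): the denotation of the symbolic fixpoint operator applied to I equals the ground immediate-consequence operator applied to the denotation of I. -/
/-- LO goals over a signature `σ`: atoms, ⊤, ⅋ (par) and & (with). -/
inductive Goal (σ : Type) : Type
  | atom : σ → Goal σ
  | top : Goal σ
  | par : Goal σ → Goal σ → Goal σ
  | wth : Goal σ → Goal σ → Goal σ
  deriving DecidableEq

variable {σ : Type} [DecidableEq σ] [Fintype σ]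

/-- A fact: a finite multiset over the signature. -/
abbrev LOFact (σ : Type) := Multiset σ

/-- A context: a finite multiset of goals. -/
abbrev Ctx (σ : Type) := Multiset (Goal σ)

/-- An LO program: a finite set of clauses `H ⊸ G`, a clause being represented by
the multiset ⟨H⟩ of atoms of its head together with its body goal. -/
abbrev LOProgram (σ : Type) := Finset (Multiset σ × Goal σ)

/-- LO provability `P ⇒ Δ`. -/
inductive LOProv (P : LOProgram σ) : Ctx σ → Prop
  | topR (Δ : Ctx σ) : LOProv P (Goal.top ::ₘ Δ)
  | parR (G₁ G₂ : Goal σ) (Δ : Ctx σ) :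
      LOProv P (G₁ ::ₘ G₂ ::ₘ Δ) → LOProv P (Goal.par G₁ G₂ ::ₘ Δ)
  | wthR (G₁ G₂ : Goal σ) (Δ : Ctx σ) :
      LOProv P (G₁ ::ₘ Δ) → LOProv P (G₂ ::ₘ Δ) → LOProv P (Goal.wth G₁ G₂ ::ₘ Δ)
  | bc (H : Multiset σ) (G : Goal σ) (A : LOFact σ) :
      (H, G) ∈ P → LOProv P (G ::ₘ A.map Goal.atom) →
      LOProv P (H.map Goal.atom + A.map Goal.atom)

/-- The satisfiability judgment `I ⊨ Δ[A]`. -/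
inductive Sat (I : Set (LOFact σ)) : Ctx σ → LOFact σ → Prop
  | top (Δ : Ctx σ) (A : LOFact σ) : Sat I (Goal.top ::ₘ Δ) A
  | fact (A A' : LOFact σ) : A + A' ∈ I → Sat I (A.map Goal.atom) A'
  | par (G₁ G₂ : Goal σ) (Δ : Ctx σ) (A : LOFact σ) :
      Sat I (G₁ ::ₘ G₂ ::ₘ Δ) A → Sat I (Goal.par G₁ G₂ ::ₘ Δ) A
  | wth (G₁ G₂ : Goal σ) (Δ : Ctx σ) (A : LOFact σ) :
      Sat I (G₁ ::ₘ Δ) A → Sat I (G₂ ::ₘ Δ) A → Sat I (Goal.wth G₁ G₂ ::ₘ Δ) A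

/-- The immediate-consequence operator `T_P`. -/
def TP (P : LOProgram σ) (I : Set (LOFact σ)) : Set (LOFact σ) :=
  { M | ∃ H G A, (H, G) ∈ P ∧ Sat I ({G} : Ctx σ) A ∧ M = H + A }

/-- The denotation (upward closure) of a set of facts. -/
def den (I : Set (LOFact σ)) : Set (LOFact σ) := { B : LOFact σ | ∃ A ∈ I, A ≤ B }

/-- The symbolic satisfiability judgment `I ⊩ Δ[A]`
(`B - A` is multiset difference, `A₁ ∪ A₂` is the multiset least upper bound). -/
inductive SSat (I : Set (LOFact σ)) : Ctx σ → LOFact σ → Prop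
  | top (Δ : Ctx σ) : SSat I (Goal.top ::ₘ Δ) 0
  | fact (A B : LOFact σ) : B ∈ I → SSat I (A.map Goal.atom) (B - A)
  | par (G₁ G₂ : Goal σ) (Δ : Ctx σ) (A : LOFact σ) :
      SSat I (G₁ ::ₘ G₂ ::ₘ Δ) A → SSat I (Goal.par G₁ G₂ ::ₘ Δ) A
  | wth (G₁ G₂ : Goal σ) (Δ : Ctx σ) (A₁ A₂ : LOFact σ) :
      SSat I (G₁ ::ₘ Δ) A₁ → SSat I (G₂ ::ₘ Δ) A₂ →
      SSat I (Goal.wth G₁ G₂ ::ₘ Δ) (A₁ ∪ A₂)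

/-- The symbolic fixpoint operator `S_P`. -/
def SP (P : LOProgram σ) (I : Set (LOFact σ)) : Set (LOFact σ) :=
  { M | ∃ H G A, (H, G) ∈ P ∧ SSat I ({G} : Ctx σ) A ∧ M = H + A }

/-!
Upward closure commutes with unions and, since `H + A ≤ B` forces `B = H + (A + D)` for some `D`,
with translation by a clause head. So it suffices that the facts satisfying `Δ` over `den I` are
exactly those lying above a symbolic output for `Δ` over `I`. The symbolic rules compute least
outputs: `B - A` is the least `A'` with `B ≤ A + A'`, and `A₁ ∪ A₂` is the least fact above the
outputs of both branches of a `&`.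
-/

section Denotation

omit [DecidableEq σ] [Fintype σ]

theorem coe_upperClosure_eq_den (I : Set (LOFact σ)) : (upperClosure I : Set (LOFact σ)) = den I :=
  rfl

theorem isUpperSet_den (I : Set (LOFact σ)) : IsUpperSet (den I) :=
  (upperClosure I).upper

theorem den_iUnion {ι : Sort*} (f : ι → Set (LOFact σ)) : den (⋃ i, f i) = ⋃ i, den (f i) := by
  simp only [← coe_upperClosure_eq_den, upperClosure_iUnion, UpperSet.coe_iInf]

theorem den_image_add_left (H : LOFact σ) (I : Set (LOFact σ)) :
    den ((H + ·) '' I) = (H + ·) '' den I := by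
  apply Set.Subset.antisymm
  · rintro _ ⟨_, ⟨A, hA, rfl⟩, hle⟩
    obtain ⟨D, rfl⟩ := Multiset.le_iff_exists_add.mp hle
    exact ⟨A + D, ⟨A, hA, Multiset.le_add_right A D⟩, (add_assoc H A D).symm⟩
  · rintro _ ⟨B, ⟨A, hA, hAB⟩, rfl⟩
    exact ⟨H + A, ⟨A, hA, rfl⟩, add_le_add_right hAB H⟩

end Denotation

section Satisfiability

omit [Fintype σ]

variable {I : Set (LOFact σ)} {Δ : Ctx σ} {A B : LOFact σ}

omit [DecidableEq σ] in
theorem Sat.mono (hI : IsUpperSet I) (hA : Sat I Δ A) (hAB : A ≤ B) : Sat I Δ B := by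
  induction hA with
  | top Δ => exact .top Δ B
  | fact C A hC => exact .fact C B (hI (add_le_add_right hAB C) hC)
  | par G₁ G₂ Δ A _ ih => exact .par G₁ G₂ Δ B (ih hAB)
  | wth G₁ G₂ Δ A _ _ ih₁ ih₂ => exact .wth G₁ G₂ Δ B (ih₁ hAB) (ih₂ hAB)

theorem SSat.sat_den (hA : SSat I Δ A) : Sat (den I) Δ A := by
  induction hA with
  | top Δ => exact .top Δ 0
  | fact A B hB => exact .fact A (B - A) ⟨B, hB, le_add_tsub⟩
  | par G₁ G₂ Δ A _ ih => exact .par G₁ G₂ Δ A ih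
  | wth G₁ G₂ Δ A₁ A₂ _ _ ih₁ ih₂ =>
    exact .wth G₁ G₂ Δ (A₁ ∪ A₂) (ih₁.mono (isUpperSet_den I) Multiset.le_union_left)
      (ih₂.mono (isUpperSet_den I) Multiset.le_union_right)

theorem Sat.exists_ssat_le (hB : Sat (den I) Δ B) : ∃ A, SSat I Δ A ∧ A ≤ B := by
  induction hB with
  | top Δ B => exact ⟨0, .top Δ, Multiset.zero_le B⟩
  | fact A A' hA =>
    obtain ⟨B, hB, hle⟩ := hA
    exact ⟨B - A, .fact A B hB, tsub_le_iff_left.mpr hle⟩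
  | par G₁ G₂ Δ B _ ih =>
    obtain ⟨A, hA, hle⟩ := ih
    exact ⟨A, .par G₁ G₂ Δ A hA, hle⟩
  | wth G₁ G₂ Δ B _ _ ih₁ ih₂ =>
    obtain ⟨A₁, hA₁, hle₁⟩ := ih₁
    obtain ⟨A₂, hA₂, hle₂⟩ := ih₂
    exact ⟨A₁ ∪ A₂, .wth G₁ G₂ Δ A₁ A₂ hA₁ hA₂, Multiset.union_le hle₁ hle₂⟩

theorem den_setOf_ssat (I : Set (LOFact σ)) (Δ : Ctx σ) :
    den {A | SSat I Δ A} = {B | Sat (den I) Δ B} := by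
  apply Set.Subset.antisymm
  · rintro B ⟨A, hA, hAB⟩
    exact hA.sat_den.mono (isUpperSet_den I) hAB
  · intro B hB
    exact hB.exists_ssat_le

end Satisfiability

section Operators

omit [Fintype σ]

omit [DecidableEq σ] in
theorem TP_eq_iUnion (P : LOProgram σ) (I : Set (LOFact σ)) :
    TP P I = ⋃ c ∈ P, (c.1 + ·) '' {A | Sat I {c.2} A} := by
  ext M
  simp [TP, eq_comm]

theorem SP_eq_iUnion (P : LOProgram σ) (I : Set (LOFact σ)) :
    SP P I = ⋃ c ∈ P, (c.1 + ·) '' {A | SSat I {c.2} A} := by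
  ext M
  simp [SP, eq_comm]

theorem den_SP_eq_TP_den_general (P : LOProgram σ) (I : Set (LOFact σ)) :
    den (SP P I) = TP P (den I) :=
  calc
    den (SP P I) = ⋃ c ∈ P, den ((c.1 + ·) '' {A | SSat I {c.2} A}) := by
      simp only [SP_eq_iUnion, den_iUnion]
    _ = ⋃ c ∈ P, (c.1 + ·) '' {B | Sat (den I) {c.2} B} := by
      simp only [den_image_add_left, den_setOf_ssat]
    _ = TP P (den I) := (TP_eq_iUnion P (den I)).symm

end Operators

/-- `S_P` is sound and complete w.r.t. `T_P`:
the denotation of `S_P(I)` equals `T_P` applied to the denotation of `I`. -/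
theorem den_SP_eq_TP_den (P : LOProgram σ) (I : Set (LOFact σ)) :
    den (SP P I) = TP P (den I) :=
  den_SP_eq_TP_den_general P I
end

section
/- Termination and correctness of the symbolic fixpoint computation: for every LO program P, there exists k ∈ ℕ such that ⋃_{i=0}^{k} S_P^i(∅) ≃ ⋃_{i≥0} S_P^i(∅) (the symbolic fixpoint is reached after finitely many steps), and O(P) = den(⋃_{i≥0} S_P^i(∅)), i.e., the denotation of the symbolic fixpoint equals the set of facts provable from P in LO. -/
variable {σ : Type} [DecidableEq σ] [Fintype σ]

/-- The operational semantics `O(P)`: the set of provable facts. -/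
def OP (P : LOProgram σ) : Set (LOFact σ) := { A : LOFact σ | LOProv P (A.map Goal.atom) }

/-! Correctness: `O(P)` is an upper set closed under `S_P`, so it contains the symbolic fixpoint;
conversely, the fixpoint is closed under `S_P` because `S_P` is finitary, and every provable context
is satisfied in it with empty output.

Termination: `S_P` only ever produces facts over the finitely many atoms in the heads of `P`. By
Dickson's lemma such facts are well quasi-ordered, so the fixpoint has finitely many minimal
elements, all of which occur by some finite stage. -/

section WellQuasiOrder

variable {α ι : Type*}

theorem isPWO_setOf_multiset_forall_mem {s : Set α} (hs : s.Finite) :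
    {m : Multiset α | ∀ a ∈ m, a ∈ s}.IsPWO := by
  classical
  have := hs.to_subtype
  refine Set.partiallyWellOrderedOn_iff_exists_lt.mpr fun f hf ↦ ?_
  obtain ⟨i, j, hij, hle⟩ := wellQuasiOrdered_le fun (n : ℕ) (a : s) ↦ (f n).count a.1
  refine ⟨i, j, hij, Multiset.le_iff_count.mpr fun a ↦ ?_⟩
  by_cases ha : a ∈ s
  · exact hle ⟨a, ha⟩
  · simp [Multiset.count_eq_zero_of_notMem fun h ↦ ha (hf i a h)]

theorem exists_finite_subset_upperClosure_eq [PartialOrder α] {s : Set α} (hs : s.IsPWO) :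
    ∃ t ⊆ s, t.Finite ∧ upperClosure t = upperClosure s := by
  refine ⟨{a | Minimal (· ∈ s) a}, fun a ha ↦ ha.prop,
    (setOfPred_minimal_antichain _).finite_of_partiallyWellOrderedOn
      (hs.mono fun a ha ↦ ha.prop), ?_⟩
  refine le_antisymm ?_ (upperClosure_anti fun a ha ↦ ha.prop)
  rw [le_upperClosure]
  intro a ha
  obtain ⟨b, hba, hb⟩ := hs.exists_le_minimal ha
  exact ⟨b, hb, hba⟩

theorem exists_upperClosure_biUnion_le_eq [PartialOrder α] [Preorder ι] [IsDirectedOrder ι]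
    [Nonempty ι] {I : ι → Set α} (hI : (⋃ i, I i).IsPWO) :
    ∃ k, upperClosure (⋃ i ≤ k, I i) = upperClosure (⋃ i, I i) := by
  obtain ⟨t, htI, htfin, ht⟩ := exists_finite_subset_upperClosure_eq hI
  lift t to Finset α using htfin
  rw [← Set.iUnion_accumulate] at htI
  obtain ⟨k, hk⟩ :=
    Set.monotone_accumulate.directed_le.exists_mem_subset_of_finset_subset_biUnion htI
  refine ⟨k, le_antisymm ?_ (upperClosure_anti (Set.iUnion₂_subset_iUnion _ _))⟩
  rw [← ht]
  exact upperClosure_anti hk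

end WellQuasiOrder

theorem exists_eq_cons_of_cons_eq_add {α : Type*} {a : α} {s t u : Multiset α} (ha : a ∉ u)
    (h : a ::ₘ s = t + u) : ∃ t', t = a ::ₘ t' ∧ s = t' + u := by
  have hat : a ∈ t := (Multiset.mem_add.mp (h ▸ Multiset.mem_cons_self a s)).resolve_right ha
  obtain ⟨t', rfl⟩ := Multiset.exists_cons_of_mem hat
  rw [Multiset.cons_add] at h
  exact ⟨t', rfl, (Multiset.cons_inj_right a).mp h⟩

section Provability

omit [DecidableEq σ] [Fintype σ]

variable {P : LOProgram σ} {Δ : Ctx σ}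

theorem Goal.atom_injective : Function.Injective (Goal.atom : σ → Goal σ) :=
  fun _ _ ↦ Goal.atom.inj

theorem den_eq_upperClosure (I : Set (LOFact σ)) : den I = upperClosure I := rfl

theorem LOProv.add_map_atom (h : LOProv P Δ) (C : LOFact σ) : LOProv P (Δ + C.map Goal.atom) := by
  induction h with
  | topR Δ => simpa only [Multiset.cons_add] using .topR _
  | parR G₁ G₂ Δ _ ih => simpa only [Multiset.cons_add] using .parR _ _ _ (by simpa using ih)
  | wthR G₁ G₂ Δ _ _ ih₁ ih₂ =>
    simpa only [Multiset.cons_add] using .wthR _ _ _ (by simpa using ih₁) (by simpa using ih₂)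
  | bc H G A hHG _ ih =>
    rw [Multiset.cons_add, ← Multiset.map_add] at ih
    rw [add_assoc, ← Multiset.map_add]
    exact .bc H G (A + C) hHG ih

theorem LOProv.add_map_atom_of_le {A B : LOFact σ} (hAB : A ≤ B)
    (h : LOProv P (Δ + A.map Goal.atom)) : LOProv P (Δ + B.map Goal.atom) := by
  obtain ⟨C, rfl⟩ := Multiset.le_iff_exists_add.mp hAB
  rw [Multiset.map_add, ← add_assoc]
  exact h.add_map_atom C

theorem isUpperSet_OP (P : LOProgram σ) : IsUpperSet (OP P) := fun A B hAB hA ↦ by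
  have hA' : LOProv P (0 + A.map Goal.atom) := by rwa [zero_add]
  change LOProv P (B.map Goal.atom)
  simpa only [zero_add] using hA'.add_map_atom_of_le hAB

/-- The atoms occurring in the heads of the clauses of `P`; these are the only atoms that occur in
the facts computed by `SP P`. -/
def LOProgram.headAtoms (P : LOProgram σ) : Set σ :=
  ⋃ c ∈ P, {a | a ∈ c.1}

theorem LOProgram.finite_headAtoms (P : LOProgram σ) : P.headAtoms.Finite :=
  P.finite_toSet.biUnion fun c _ ↦ Multiset.finite_toSet c.1

end Provability

section Symbolic

omit [Fintype σ]

variable {P : LOProgram σ} {I J : Set (LOFact σ)} {Δ : Ctx σ} {A C D : LOFact σ}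

theorem SSat.mono (hIJ : I ⊆ J) (h : SSat I Δ A) : SSat J Δ A := by
  induction h with
  | top Δ => exact .top Δ
  | fact A B hB => exact .fact A B (hIJ hB)
  | par _ _ _ _ _ ih => exact .par _ _ _ _ ih
  | wth _ _ _ _ _ _ _ ih₁ ih₂ => exact .wth _ _ _ _ _ ih₁ ih₂

theorem SSat.exists_of_iUnion {ι : Type*} [Nonempty ι] {I : ι → Set (LOFact σ)}
    (hI : Directed (· ⊆ ·) I) (h : SSat (⋃ i, I i) Δ A) : ∃ i, SSat (I i) Δ A := by
  induction h with
  | top Δ => exact ⟨Classical.arbitrary ι, .top Δ⟩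
  | fact A B hB =>
    obtain ⟨i, hi⟩ := Set.mem_iUnion.mp hB
    exact ⟨i, .fact A B hi⟩
  | par _ _ _ _ _ ih => exact ih.imp fun _ ↦ .par _ _ _ _
  | wth _ _ _ _ _ _ _ ih₁ ih₂ =>
    obtain ⟨i, hi⟩ := ih₁
    obtain ⟨j, hj⟩ := ih₂
    obtain ⟨k, hik, hjk⟩ := hI i j
    exact ⟨k, .wth _ _ _ _ _ (hi.mono hik) (hj.mono hjk)⟩

theorem SSat.forall_mem {s : Set σ} (hI : ∀ B ∈ I, ∀ a ∈ B, a ∈ s) (h : SSat I Δ A) :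
    ∀ a ∈ A, a ∈ s := by
  induction h with
  | top => simp
  | fact A B hB => exact fun a ha ↦ hI B hB a (Multiset.mem_of_le tsub_le_self ha)
  | par _ _ _ _ _ ih => exact ih
  | wth _ _ _ _ _ _ _ ih₁ ih₂ =>
    exact fun a ha ↦ (Multiset.mem_union.mp ha).elim (ih₁ a) (ih₂ a)

theorem SSat.loProv (hI : I ⊆ OP P) (h : SSat I Δ A) : LOProv P (Δ + A.map Goal.atom) := by
  induction h with
  | top Δ => simpa only [Multiset.cons_add] using .topR _
  | fact A B hB =>
    rw [← Multiset.map_add]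
    exact isUpperSet_OP P le_add_tsub (hI hB)
  | par G₁ G₂ Δ A _ ih => simpa only [Multiset.cons_add] using .parR _ _ _ (by simpa using ih)
  | wth G₁ G₂ Δ A₁ A₂ _ _ ih₁ ih₂ =>
    rw [Multiset.cons_add]
    refine .wthR _ _ _ ?_ ?_ <;> rw [← Multiset.cons_add]
    · exact ih₁.add_map_atom_of_le Multiset.le_union_left
    · exact ih₂.add_map_atom_of_le Multiset.le_union_right

theorem SSat.of_add_map_atom (h : SSat I (Δ + C.map Goal.atom) D) :
    ∃ D' ≤ D + C, SSat I Δ D' := by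
  generalize hΓ : Δ + C.map Goal.atom = Γ at h
  induction h generalizing Δ with
  | top =>
    obtain ⟨Δ', rfl, -⟩ := exists_eq_cons_of_cons_eq_add (by simp) hΓ.symm
    exact ⟨0, Multiset.zero_le _, .top Δ'⟩
  | fact A B hB =>
    have hCA : C ≤ A := by
      rw [← Multiset.map_le_map_iff Goal.atom_injective, ← hΓ]
      exact Multiset.le_add_left _ _
    obtain ⟨E, rfl⟩ := exists_add_of_le hCA
    rw [add_comm C, Multiset.map_add] at hΓ
    obtain rfl := add_right_cancel hΓ
    refine ⟨B - E, ?_, .fact E B hB⟩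
    rw [add_comm C, tsub_add_eq_tsub_tsub]
    exact le_tsub_add
  | par G₁ G₂ _ A _ ih =>
    obtain ⟨Δ', rfl, rfl⟩ := exists_eq_cons_of_cons_eq_add (by simp) hΓ.symm
    obtain ⟨D', hD', h'⟩ := ih (Δ := G₁ ::ₘ G₂ ::ₘ Δ') (by simp only [Multiset.cons_add])
    exact ⟨D', hD', .par _ _ _ _ h'⟩
  | wth G₁ G₂ _ A₁ A₂ _ _ ih₁ ih₂ =>
    obtain ⟨Δ', rfl, rfl⟩ := exists_eq_cons_of_cons_eq_add (by simp) hΓ.symm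
    obtain ⟨D₁, hD₁, h₁⟩ := ih₁ (Δ := G₁ ::ₘ Δ') (by simp only [Multiset.cons_add])
    obtain ⟨D₂, hD₂, h₂⟩ := ih₂ (Δ := G₂ ::ₘ Δ') (by simp only [Multiset.cons_add])
    refine ⟨D₁ ∪ D₂, Multiset.union_le ?_ ?_, .wth _ _ _ _ _ h₁ h₂⟩
    · exact hD₁.trans (by gcongr; exact Multiset.le_union_left)
    · exact hD₂.trans (by gcongr; exact Multiset.le_union_right)

theorem SSat.mem_of_zero (h : SSat I 0 D) : D ∈ I := by
  generalize hΔ : (0 : Ctx σ) = Δ at h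
  cases h with
  | fact A B hB =>
    obtain rfl := Multiset.map_eq_zero.mp hΔ.symm
    rwa [tsub_zero]
  | _ => exact absurd hΔ (Multiset.zero_ne_cons)

theorem SSat.mem_den (h : SSat I (A.map Goal.atom) 0) : A ∈ den I := by
  obtain ⟨B, hBA, hB⟩ := SSat.of_add_map_atom (Δ := 0) ((zero_add (A.map Goal.atom)).symm ▸ h)
  exact ⟨B, hB.mem_of_zero, hBA.trans_eq (zero_add A)⟩

theorem LOProv.sSat_zero (hI : SP P I ⊆ I) (h : LOProv P Δ) : SSat I Δ 0 := by
  induction h with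
  | topR Δ => exact .top Δ
  | parR _ _ _ _ ih => exact .par _ _ _ _ ih
  | wthR _ _ _ _ _ ih₁ ih₂ => simpa using .wth _ _ _ _ _ ih₁ ih₂
  | bc H G A hHG _ ih =>
    rw [← Multiset.singleton_add] at ih
    obtain ⟨A', hA', hG⟩ := ih.of_add_map_atom
    rw [zero_add] at hA'
    have hmem : H + A' ∈ I := hI ⟨H, G, A', hHG, hG, rfl⟩
    have hsat : SSat I ((H + A).map Goal.atom) (H + A' - (H + A)) := .fact _ _ hmem
    rwa [tsub_eq_zero_of_le (by gcongr), Multiset.map_add] at hsat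

theorem SP_mono (P : LOProgram σ) : Monotone (SP P) := by
  rintro I J hIJ _ ⟨H, G, A, hHG, hG, rfl⟩
  exact ⟨H, G, A, hHG, hG.mono hIJ, rfl⟩

theorem SP_OP_subset (P : LOProgram σ) : SP P (OP P) ⊆ OP P := by
  rintro _ ⟨H, G, A, hHG, hG, rfl⟩
  change LOProv P _
  rw [Multiset.map_add]
  exact .bc H G A hHG (hG.loProv subset_rfl)

theorem SP_iUnion_subset {ι : Type*} [Nonempty ι] {I : ι → Set (LOFact σ)}
    (hI : Directed (· ⊆ ·) I) : SP P (⋃ i, I i) ⊆ ⋃ i, SP P (I i) := by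
  rintro _ ⟨H, G, A, hHG, hG, rfl⟩
  obtain ⟨i, hi⟩ := hG.exists_of_iUnion hI
  exact Set.mem_iUnion.mpr ⟨i, H, G, A, hHG, hi, rfl⟩

/-- The symbolic fixpoint `⋃ᵢ S_P^i(∅)`. -/
def symbolicFixpoint (P : LOProgram σ) : Set (LOFact σ) :=
  ⋃ i, (SP P)^[i] ∅

theorem SP_symbolicFixpoint_subset (P : LOProgram σ) :
    SP P (symbolicFixpoint P) ⊆ symbolicFixpoint P := by
  have hmono : Monotone fun i ↦ (SP P)^[i] ∅ :=
    (SP_mono P).monotone_iterate_of_le_map (Set.empty_subset _)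
  refine (SP_iUnion_subset hmono.directed_le).trans (Set.iUnion_subset fun i ↦ ?_)
  rw [← Function.iterate_succ_apply' (SP P)]
  exact Set.subset_iUnion (fun i ↦ (SP P)^[i] ∅) (i + 1)

theorem symbolicFixpoint_subset (hI : SP P I ⊆ I) : symbolicFixpoint P ⊆ I := by
  refine Set.iUnion_subset fun i ↦ ?_
  induction i with
  | zero => exact Set.empty_subset I
  | succ i ih =>
    rw [Function.iterate_succ_apply']
    exact (SP_mono P ih).trans hI

theorem OP_eq_den_symbolicFixpoint (P : LOProgram σ) : OP P = den (symbolicFixpoint P) := by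
  refine Set.Subset.antisymm (fun A hA ↦ ?_) ?_
  · exact (LOProv.sSat_zero (SP_symbolicFixpoint_subset P) hA).mem_den
  · rw [den_eq_upperClosure]
    exact upperClosure_min (symbolicFixpoint_subset (SP_OP_subset P)) (isUpperSet_OP P)

theorem mem_headAtoms_of_mem_symbolicFixpoint (hA : A ∈ symbolicFixpoint P) :
    ∀ a ∈ A, a ∈ P.headAtoms := by
  suffices SP P {B | ∀ a ∈ B, a ∈ P.headAtoms} ⊆ {B | ∀ a ∈ B, a ∈ P.headAtoms} from
    symbolicFixpoint_subset this hA
  rintro _ ⟨H, G, A, hHG, hG, rfl⟩ a ha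
  obtain haH | haA := Multiset.mem_add.mp ha
  · exact Set.mem_biUnion hHG haH
  · exact hG.forall_mem (fun _ hB ↦ hB) a haA

theorem isPWO_symbolicFixpoint (P : LOProgram σ) : (symbolicFixpoint P).IsPWO :=
  (isPWO_setOf_multiset_forall_mem P.finite_headAtoms).mono
    fun _ ↦ mem_headAtoms_of_mem_symbolicFixpoint

theorem symbolic_fixpoint_terminates_and_correct_general (P : LOProgram σ) :
    (∃ k : ℕ, den (⋃ i ≤ k, (SP P)^[i] ∅) = den (⋃ i, (SP P)^[i] ∅)) ∧
    OP P = den (⋃ i, (SP P)^[i] ∅) := by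
  refine ⟨?_, OP_eq_den_symbolicFixpoint P⟩
  obtain ⟨k, hk⟩ := exists_upperClosure_biUnion_le_eq (isPWO_symbolicFixpoint P)
  exact ⟨k, by simp only [den_eq_upperClosure, hk]⟩

end Symbolic

/-- Termination and correctness of the symbolic fixpoint computation:
the iteration of `S_P` converges (modulo `≃`, i.e. modulo `den`) after finitely
many steps, and the denotation of the symbolic fixpoint is exactly `O(P)`. -/
theorem symbolic_fixpoint_terminates_and_correct (P : LOProgram σ) :
    (∃ k : ℕ, den (⋃ i ≤ k, (SP P)^[i] ∅) = den (⋃ i, (SP P)^[i] ∅)) ∧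
    OP P = den (⋃ i, (SP P)^[i] ∅) :=
  symbolic_fixpoint_terminates_and_correct_general P
end
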